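/- For every real number C > 5 and every integer r ≥ 2 there exists an integer N such that for every integer n ≥ N, the r-colour size-Ramsey number of the path on n vertices satisfies R̂(P_n, r) < 400⁵ · C · r^{2 + 1/(C−4)} · n. -/

import Mathlib

open SimpleGraph

/-- `G → (F)_r` : every colouring of the edges of `G` with `r` colours yields a
monochromatic copy of `F`, i.e. an injective map preserving adjacency all of whose
edges receive the same colour. -/
def Arrows {V W : Type*} (G : SimpleGraph V) (F : SimpleGraph W) (r : ℕ) : Prop :=
  ∀ c : Sym2 V → Fin r, ∃ (k : Fin r) (f : W → V), Function.Injective f ∧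
    ∀ a b, F.Adj a b → G.Adj (f a) (f b) ∧ c s(f a, f b) = k

/-- The `r`-colour size-Ramsey number of `F`: the smallest number of edges of a
(finite) graph `G` satisfying `G → (F)_r`. -/
noncomputable def sizeRamsey {W : Type*} (F : SimpleGraph W) (r : ℕ) : ℕ :=
  sInf {m | ∃ (N : ℕ) (G : SimpleGraph (Fin N)), G.edgeSet.ncard = m ∧ Arrows G F r}

/-!
Let `H` be a graph without a path on `n` vertices. Stop a depth-first search of `H` when `n`
vertices are fully explored: their neighbours are either explored or on the stack, which is a path
and so has fewer than `n` vertices. Removing the explored vertices and repeating, one finds `a`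
sets of size at most `2 * n` that contain all edges of `H`, if `H` has `a * n` vertices. So if `G`
on `a * n` vertices does not arrow the path in `r` colours, then `r * a` such sets contain all
edges of `G`, and one of them contains at least a `1 / (r * a)` fraction of the edges.

Now choose `t * (r * a)` random pairs on `a * n` vertices, with `a = 32 * r`. A set of `2 * n`
vertices contains `t / 8` pairs on average, and the union bound over all such sets allows each of
them to contain fewer than `t` pairs as soon as `t` is about `2 * n * log r`. This gives a graph
with `O(r ^ 2 * log r * n)` edges that arrows the path, and `log r ≤ (C - 4) * r ^ (1 / (C - 4))`.
-/

section Path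

variable {V : Type*} {H : SimpleGraph V}

theorem pathGraph_isContained_of_isChain {l : List V} {n : ℕ} (hl : l.Nodup)
    (hchain : l.IsChain H.Adj) (hn : n ≤ l.length) : pathGraph n ⊑ H := by
  have hsucc (i : ℕ) (hi : i + 1 < l.length) : H.Adj l[i] l[i + 1] :=
    List.isChain_iff_getElem.1 hchain i hi
  refine ⟨⟨⟨fun i => l[i.val]'(i.2.trans_le hn), fun {i j} hij => ?_⟩, fun i j hij => ?_⟩⟩
  · rcases pathGraph_adj.1 hij with hij | hij
    · simpa only [← hij] using hsucc i _
    · simpa only [← hij] using (hsucc j _).symm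
  · exact Fin.ext (hl.getElem_inj_iff.1 hij)

end Path

section DFS

open Finset

/-- A state of a depth-first search of `H` restricted to `A`: `S` is the set of fully explored
vertices and `l` is the stack, topmost vertex first, which always forms a path. -/
structure IsDFSState {V : Type*} (H : SimpleGraph V) (A S : Finset V) (l : List V) : Prop where
  explored_subset : S ⊆ A
  mem_of_mem_stack : ∀ v ∈ l, v ∈ A
  notMem_of_mem_stack : ∀ v ∈ l, v ∉ S
  nodup : l.Nodup
  isChain : l.IsChain H.Adj
  mem_or_mem_of_adj : ∀ u ∈ S, ∀ v ∈ A, H.Adj u v → v ∈ S ∨ v ∈ l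

namespace IsDFSState

variable {V : Type*} {H : SimpleGraph V} {A S : Finset V} {l : List V} {v w : V}

theorem empty (H : SimpleGraph V) (A : Finset V) : IsDFSState H A ∅ [] := by
  constructor <;> simp

theorem push (h : IsDFSState H A S l) (hwA : w ∈ A) (hwS : w ∉ S) (hwl : w ∉ l)
    (hadj : ∀ v ∈ l.head?, H.Adj w v) : IsDFSState H A S (w :: l) where
  explored_subset := h.explored_subset
  mem_of_mem_stack := List.forall_mem_cons.2 ⟨hwA, h.mem_of_mem_stack⟩
  notMem_of_mem_stack := List.forall_mem_cons.2 ⟨hwS, h.notMem_of_mem_stack⟩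
  nodup := List.nodup_cons.2 ⟨hwl, h.nodup⟩
  isChain := List.isChain_cons.2 ⟨hadj, h.isChain⟩
  mem_or_mem_of_adj u hu v hv huv :=
    (h.mem_or_mem_of_adj u hu v hv huv).imp_right (List.mem_cons_of_mem _)

theorem pop [DecidableEq V] (h : IsDFSState H A S (v :: l))
    (hv : ∀ w ∈ A, H.Adj v w → w ∈ S ∨ w ∈ v :: l) : IsDFSState H A (insert v S) l where
  explored_subset := insert_subset (h.mem_of_mem_stack v List.mem_cons_self) h.explored_subset
  mem_of_mem_stack := (List.forall_mem_cons.1 h.mem_of_mem_stack).2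
  notMem_of_mem_stack w hw := by
    have hwS := (List.forall_mem_cons.1 h.notMem_of_mem_stack).2 w hw
    have hvw : w ≠ v := fun hwv => (List.nodup_cons.1 h.nodup).1 (hwv ▸ hw)
    simp [hvw, hwS]
  nodup := (List.nodup_cons.1 h.nodup).2
  isChain := h.isChain.of_cons
  mem_or_mem_of_adj u hu w hw huw := by
    have hstack : w ∈ S ∨ w ∈ v :: l := by
      rcases mem_insert.1 hu with rfl | hu
      · exact hv w hw huw
      · exact h.mem_or_mem_of_adj u hu w hw huw
    simpa only [mem_insert, List.mem_cons, or_assoc, or_left_comm] using hstack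

theorem length_stack_le (h : IsDFSState H A S l) : l.length ≤ #A := by
  classical
  rw [← List.toFinset_card_of_nodup h.nodup]
  exact card_le_card fun v hv => h.mem_of_mem_stack v (List.mem_toFinset.1 hv)

theorem exists_card_succ {S : Finset V} {l : List V} (h : IsDFSState H A S l)
    (hS : #S < #A) : ∃ S' l', IsDFSState H A S' l' ∧ #S' = #S + 1 := by
  classical
  by_cases hpush : ∃ w ∈ A, w ∉ S ∧ w ∉ l ∧ ∀ v ∈ l.head?, H.Adj w v
  · obtain ⟨w, hwA, hwS, hwl, hadj⟩ := hpush
    have hw := h.push hwA hwS hwl hadj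
    exact hw.exists_card_succ hS
  push Not at hpush
  match l with
  | [] =>
    obtain ⟨x, hxA, hxS⟩ := exists_mem_notMem_of_card_lt_card hS
    simpa using hpush x hxA hxS
  | v :: l =>
    refine ⟨insert v S, l, h.pop fun w hwA hvw => ?_, card_insert_of_notMem ?_⟩
    · by_contra! hw
      simpa [hvw.symm] using hpush w hwA hw.1 hw.2
    · exact h.notMem_of_mem_stack v List.mem_cons_self
termination_by #A - l.length
decreasing_by
  have := hw.length_stack_le
  simp only [List.length_cons] at this ⊢
  omega

theorem exists_card_eq (H : SimpleGraph V) (A : Finset V) :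
    ∀ k ≤ #A, ∃ S l, IsDFSState H A S l ∧ #S = k
  | 0, _ => ⟨∅, [], empty H A, card_empty⟩
  | k + 1, hk => by
    obtain ⟨S, l, h, rfl⟩ := exists_card_eq H A k (Nat.le_of_succ_le hk)
    exact h.exists_card_succ hk

end IsDFSState

variable {V : Type*} {H : SimpleGraph V}

theorem exists_card_eq_neighbors_subset_of_pathGraph_free {n : ℕ} (hH : (pathGraph n).Free H)
    {A : Finset V} (hA : n ≤ #A) :
    ∃ S ⊆ A, #S = n ∧ ∃ T : Finset V, #T ≤ n ∧
      ∀ u ∈ S, ∀ v ∈ A, H.Adj u v → v ∈ S ∨ v ∈ T := by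
  classical
  obtain ⟨S, l, h, hS⟩ := IsDFSState.exists_card_eq H A n hA
  have hl : l.length ≤ n := by
    by_contra! hl
    exact hH (pathGraph_isContained_of_isChain h.nodup h.isChain hl.le)
  refine ⟨S, h.explored_subset, hS, l.toFinset, (List.toFinset_card_le l).trans hl, ?_⟩
  simpa only [List.mem_toFinset] using h.mem_or_mem_of_adj

-- Allowing `u = v` makes the sets cover the degenerate pairs that a random choice may produce.
theorem exists_cover_of_pathGraph_free {n : ℕ} (hH : (pathGraph n).Free H) (a : ℕ)
    (A : Finset V) (hA : #A ≤ a * n) :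
    ∃ W : Fin a → Finset V, (∀ j, #(W j) ≤ 2 * n) ∧
      ∀ u ∈ A, ∀ v ∈ A, u = v ∨ H.Adj u v → ∃ j, u ∈ W j ∧ v ∈ W j := by
  classical
  induction a generalizing A with
  | zero =>
    obtain rfl : A = ∅ := by simpa using hA
    exact ⟨fun _ => ∅, by simp⟩
  | succ a ih =>
    rcases le_total #A n with hAn | hAn
    · exact ⟨fun _ => A, fun _ => hAn.trans (by omega), fun u hu v hv _ => ⟨0, hu, hv⟩⟩
    obtain ⟨S, hSA, hS, T, hT, hadj⟩ := exists_card_eq_neighbors_subset_of_pathGraph_free hH hAn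
    have hrest : #(A \ S) ≤ a * n := by
      rw [card_sdiff_of_subset hSA, hS, Nat.sub_le_iff_le_add]
      rwa [Nat.succ_mul] at hA
    obtain ⟨W, hW, hcover⟩ := ih (A \ S) hrest
    have hST : #(S ∪ T) ≤ 2 * n := (card_union_le S T).trans (by omega)
    refine ⟨Fin.cons (S ∪ T) W, Fin.cases hST hW, fun u hu v hv huv => ?_⟩
    by_cases huS : u ∈ S
    · refine ⟨0, mem_union_left T huS, ?_⟩
      rcases huv with rfl | huv
      · exact mem_union_left T huS
      · exact mem_union.2 (hadj u huS v hv huv)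
    by_cases hvS : v ∈ S
    · refine ⟨0, ?_, mem_union_left T hvS⟩
      rcases huv with rfl | huv
      · exact mem_union_left T hvS
      · exact mem_union.2 (hadj v hvS u hu huv.symm)
    obtain ⟨j, hj⟩ := hcover u (mem_sdiff.2 ⟨hu, huS⟩) v (mem_sdiff.2 ⟨hv, hvS⟩) huv
    exact ⟨j.succ, hj⟩

end DFS

section FirstMoment

open Finset Real

variable {ι α : Type*} [Fintype ι] [Fintype α] [DecidableEq α]

theorem card_filter_forall_mem [DecidableEq ι] (I : Finset ι) (B : Finset α) :
    #{ω : ι → α | ∀ i ∈ I, ω i ∈ B} =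
      #B ^ #I * Fintype.card α ^ (Fintype.card ι - #I) := by
  have hpi : ({ω : ι → α | ∀ i ∈ I, ω i ∈ B} : Finset (ι → α)) =
      Fintype.piFinset fun i => if i ∈ I then B else univ := by
    ext ω
    simp only [mem_filter_univ, Fintype.mem_piFinset]
    exact forall_congr' fun i => by split_ifs <;> simp [*]
  rw [hpi, Fintype.card_piFinset]
  simp only [apply_ite card, card_univ]
  rw [prod_ite, prod_const, prod_const, filter_univ_mem, filter_not, filter_univ_mem,
    ← compl_eq_univ_sdiff, card_compl]

theorem exists_forall_card_filter_mem_lt (𝓕 : Finset (Finset α)) {s t : ℕ}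
    (hs : ∀ B ∈ 𝓕, #B ≤ s)
    (h : #𝓕 * (Fintype.card ι).choose t * (s ^ t * Fintype.card α ^ (Fintype.card ι - t)) <
      Fintype.card α ^ Fintype.card ι) :
    ∃ ω : ι → α, ∀ B ∈ 𝓕, #{i | ω i ∈ B} < t := by
  classical
  by_contra! hbad
  let index := 𝓕 ×ˢ powersetCard t (univ : Finset ι)
  let bad (p : Finset α × Finset ι) : Finset (ι → α) := {ω | ∀ i ∈ p.2, ω i ∈ p.1}
  have hcover : univ ⊆ index.biUnion bad := by
    intro ω _
    obtain ⟨B, hB, hBt⟩ := hbad ω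
    obtain ⟨I, hI, hIt⟩ := exists_subset_card_eq hBt
    refine mem_biUnion.2 ⟨(B, I), by simp [index, hB, hIt, mem_powersetCard], ?_⟩
    exact (mem_filter_univ ω).2 fun i hi => (mem_filter_univ i).1 (hI hi)
  have hcard : ∀ p ∈ index, #(bad p) ≤ s ^ t * Fintype.card α ^ (Fintype.card ι - t) := by
    rintro ⟨B, I⟩ hp
    obtain ⟨hB, hI⟩ := mem_product.1 hp
    rw [card_filter_forall_mem, (mem_powersetCard.1 hI).2]
    gcongr
    exact hs B hB
  have hunion := (card_le_card hcover).trans (card_biUnion_le_card_mul _ _ _ hcard)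
  rw [card_univ, Fintype.card_fun, card_product, card_powersetCard, card_univ] at hunion
  exact h.not_ge hunion

theorem choose_mul_le_exp_mul_pow (k d : ℕ) : ((k * d).choose k : ℝ) ≤ (exp 1 * d) ^ k :=
  calc ((k * d).choose k : ℝ) ≤ ((k * d : ℕ) : ℝ) ^ k / k.factorial := Nat.choose_le_pow_div k _
    _ = (k : ℝ) ^ k / k.factorial * d ^ k := by push_cast; ring
    _ ≤ exp k * d ^ k := by
        gcongr
        exact pow_div_factorial_le_exp _ k.cast_nonneg k
    _ = (exp 1 * d) ^ k := by rw [mul_pow, ← exp_nat_mul, mul_one]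

theorem exists_forall_card_filter_mem_lt_of_exp [Nonempty α] (𝓕 : Finset (Finset α)) {s t d : ℕ}
    (hd : 0 < d) (hs : ∀ B ∈ 𝓕, #B ≤ s)
    (h : #𝓕 * (exp 1 * d * s) ^ t < (Fintype.card α : ℝ) ^ t) :
    ∃ ω : Fin (t * d) → α, ∀ B ∈ 𝓕, #{i | ω i ∈ B} < t := by
  refine exists_forall_card_filter_mem_lt 𝓕 hs ?_
  rw [Fintype.card_fin, ← Nat.cast_lt (α := ℝ)]
  push_cast
  set N := (Fintype.card α : ℝ)
  have hN : 0 < N := Nat.cast_pos.2 Fintype.card_pos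
  calc (#𝓕 : ℝ) * (t * d).choose t * (s ^ t * N ^ (t * d - t))
      ≤ #𝓕 * (exp 1 * d) ^ t * (s ^ t * N ^ (t * d - t)) := by
        gcongr
        exact choose_mul_le_exp_mul_pow t d
    _ = #𝓕 * (exp 1 * d * s) ^ t * N ^ (t * d - t) := by ring
    _ < N ^ t * N ^ (t * d - t) := by gcongr
    _ = N ^ (t * d) := by rw [← pow_add, Nat.add_sub_of_le (Nat.le_mul_of_pos_right t hd)]

theorem exists_pairs_forall_card_filter_mem_product_lt {V : Type*} [Fintype V] [DecidableEq V]
    [Nonempty V] {k t d : ℕ} (hd : 0 < d) (hk : k ≤ Fintype.card V)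
    (h : (Fintype.card V).choose k * (exp 1 * d * k ^ 2) ^ t < ((Fintype.card V : ℝ) ^ 2) ^ t) :
    ∃ ω : Fin (t * d) → V × V, ∀ W : Finset V, #W ≤ k → #{i | ω i ∈ W ×ˢ W} < t := by
  let squares := (powersetCard k (univ : Finset V)).image fun W => W ×ˢ W
  have hsquares : #squares ≤ (Fintype.card V).choose k :=
    card_image_le.trans (by rw [card_powersetCard, card_univ])
  have hcard : ∀ B ∈ squares, #B ≤ k ^ 2 := by
    intro B hB
    obtain ⟨W, hW, rfl⟩ := mem_image.1 hB
    rw [card_product, (mem_powersetCard.1 hW).2, sq]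
  obtain ⟨ω, hω⟩ := exists_forall_card_filter_mem_lt_of_exp squares (t := t) hd hcard <| by
    rw [Fintype.card_prod, ← sq]
    push_cast
    refine lt_of_le_of_lt ?_ h
    gcongr
  refine ⟨ω, fun W hW => ?_⟩
  obtain ⟨X, hWX, hX⟩ := exists_superset_card_eq hW hk
  refine lt_of_le_of_lt (card_le_card ?_) (hω (X ×ˢ X) ?_)
  · exact monotone_filter_right _ fun i _ hi => product_subset_product hWX hWX hi
  · exact mem_image_of_mem _ (mem_powersetCard.2 ⟨subset_univ X, hX⟩)

end FirstMoment

section PairGraph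

open Finset

/-- The simple graph whose edges are the pairs listed by `ω`; repetitions are merged and pairs
`(v, v)` are discarded. -/
def pairGraph {ι V : Type*} (ω : ι → V × V) : SimpleGraph V :=
  fromEdgeSet (Set.range fun i => s((ω i).1, (ω i).2))

variable {ι V : Type*}

theorem pairGraph_adj (ω : ι → V × V) {i : ι} (h : (ω i).1 ≠ (ω i).2) :
    (pairGraph ω).Adj (ω i).1 (ω i).2 :=
  (fromEdgeSet_adj _).2 ⟨Set.mem_range_self i, h⟩

theorem ncard_edgeSet_pairGraph_le [Finite ι] (ω : ι → V × V) :
    (pairGraph ω).edgeSet.ncard ≤ Nat.card ι := by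
  rw [pairGraph, edgeSet_fromEdgeSet, ← Set.ncard_univ]
  refine (Set.ncard_le_ncard Set.sdiff_subset (Set.finite_range _)).trans ?_
  rw [← Set.image_univ]
  exact Set.ncard_image_le Set.finite_univ

theorem arrows_of_forall_isContained_labelGraph {W : Type*} {G : SimpleGraph V}
    {F : SimpleGraph W} {r : ℕ}
    (h : ∀ C : G.EdgeLabeling (Fin r), ∃ k, F ⊑ C.labelGraph k) : Arrows G F r := by
  intro c
  obtain ⟨k, ⟨f⟩⟩ := h fun e => c e
  refine ⟨k, f, f.injective, fun a b hab => ?_⟩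
  obtain ⟨hG, hc⟩ := (EdgeLabeling.labelGraph_adj _ _).1 (f.toHom.map_adj hab)
  exact ⟨hG, hc⟩

theorem arrows_pairGraph_pathGraph [Fintype ι] [Fintype V] [DecidableEq V] {r n a t : ℕ}
    (hr : 0 < r) (ha : 0 < a) (hV : Fintype.card V ≤ a * n) (hι : r * a * t ≤ Fintype.card ι)
    (ω : ι → V × V) (hω : ∀ W : Finset V, #W ≤ 2 * n → #{i | ω i ∈ W ×ˢ W} < t) :
    Arrows (pairGraph ω) (pathGraph n) r := by
  refine arrows_of_forall_isContained_labelGraph fun C => ?_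
  by_contra hcontra
  have hfree (k : Fin r) : (pathGraph n).Free (C.labelGraph k) := fun h => hcontra ⟨k, h⟩
  choose W hWcard hW using fun k => exists_cover_of_pathGraph_free (hfree k) a univ hV
  have hcover (i : ι) : ∃ p : Fin r × Fin a, ω i ∈ W p.1 p.2 ×ˢ W p.1 p.2 := by
    obtain ⟨k, hk⟩ : ∃ k, (ω i).1 = (ω i).2 ∨ (C.labelGraph k).Adj (ω i).1 (ω i).2 := by
      by_cases hi : (ω i).1 = (ω i).2
      · exact ⟨⟨0, hr⟩, Or.inl hi⟩
      · exact ⟨_, Or.inr ((EdgeLabeling.labelGraph_adj _ _).2 ⟨pairGraph_adj ω hi, rfl⟩)⟩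
    obtain ⟨j, hj⟩ := hW k _ (mem_univ _) _ (mem_univ _) hk
    exact ⟨(k, j), mem_product.2 hj⟩
  choose p hp using hcover
  have : Nonempty (Fin r × Fin a) := ⟨(⟨0, hr⟩, ⟨0, ha⟩)⟩
  obtain ⟨⟨k, j⟩, hkj⟩ := Fintype.exists_le_card_fiber_of_mul_le_card p (n := t) (by simpa using hι)
  refine (hω (W k j) (hWcard k j)).not_ge (hkj.trans (card_le_card ?_))
  exact monotone_filter_right _ fun i _ hi => by simpa only [hi] using hp i

end PairGraph

section SizeRamsey

open Real

theorem sizeRamsey_le_of_arrows {W : Type*} {F : SimpleGraph W} {r N : ℕ}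
    {G : SimpleGraph (Fin N)} (h : Arrows G F r) : sizeRamsey F r ≤ G.edgeSet.ncard :=
  Nat.sInf_le ⟨N, G, rfl, h⟩

theorem sizeRamsey_pathGraph_le_of_choose_mul_pow_lt {r n a t : ℕ} (hr : 0 < r) (hn : 0 < n)
    (ha : 2 ≤ a) (h : (a * n).choose (2 * n) * (4 * exp 1 * r) ^ t < (a : ℝ) ^ t) :
    sizeRamsey (pathGraph n) r ≤ t * (r * a) := by
  have : NeZero (a * n) := ⟨by positivity⟩
  have hfirst : ((a * n).choose (2 * n) : ℝ) * (exp 1 * (r * a : ℕ) * (2 * n : ℕ) ^ 2) ^ t <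
      (((a * n : ℕ) : ℝ) ^ 2) ^ t :=
    calc ((a * n).choose (2 * n) : ℝ) * (exp 1 * (r * a : ℕ) * (2 * n : ℕ) ^ 2) ^ t
        = (a * n).choose (2 * n) * (4 * exp 1 * r) ^ t * (a * n ^ 2 : ℝ) ^ t := by
          rw [mul_assoc (Nat.cast _), ← mul_pow]
          push_cast
          ring
      _ < (a : ℝ) ^ t * (a * n ^ 2 : ℝ) ^ t := by gcongr
      _ = (((a * n : ℕ) : ℝ) ^ 2) ^ t := by
          rw [← mul_pow]
          push_cast
          ring
  obtain ⟨ω, hω⟩ := exists_pairs_forall_card_filter_mem_product_lt (V := Fin (a * n))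
    (by positivity : 0 < r * a) (by simpa using Nat.mul_le_mul_right n ha)
    (by rwa [Fintype.card_fin])
  have harrows : Arrows (pairGraph ω) (pathGraph n) r :=
    arrows_pairGraph_pathGraph hr (by omega) (Fintype.card_fin _).le
      (by rw [Fintype.card_fin, mul_comm]) ω hω
  exact (sizeRamsey_le_of_arrows harrows).trans (by simpa using ncard_edgeSet_pairGraph_le ω)

theorem sizeRamsey_pathGraph_le_of_sq_lt_exp {r n L : ℕ} (hr : 0 < r) (hn : 0 < n)
    (hL : (16 * exp 1 * r) ^ 2 < exp L) :
    sizeRamsey (pathGraph n) r ≤ n * L * (r * (32 * r)) := by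
  refine sizeRamsey_pathGraph_le_of_choose_mul_pow_lt hr hn (by omega) ?_
  have hchoose : ((32 * r * n).choose (2 * n) : ℝ) ≤ ((16 * exp 1 * r) ^ 2) ^ n := by
    have := choose_mul_le_exp_mul_pow (2 * n) (16 * r)
    rw [show 2 * n * (16 * r) = 32 * r * n by ring, pow_mul] at this
    convert this using 3
    push_cast
    ring
  have hexp : exp 1 ^ 2 ≤ 8 := by nlinarith [exp_one_lt_d9, exp_pos 1]
  calc ((32 * r * n).choose (2 * n) : ℝ) * (4 * exp 1 * r) ^ (n * L)
      ≤ ((16 * exp 1 * r) ^ 2) ^ n * (4 * exp 1 * r) ^ (n * L) := by gcongr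
    _ < exp L ^ n * (4 * exp 1 * r) ^ (n * L) := by gcongr
    _ = (4 * exp 1 ^ 2 * r) ^ (n * L) := by
        rw [← exp_one_pow L, ← pow_mul, mul_comm L n, ← mul_pow]
        ring
    _ ≤ ((32 * r : ℕ) : ℝ) ^ (n * L) := by
        push_cast
        gcongr
        linarith

theorem sizeRamsey_pathGraph_le_mul_log {r n : ℕ} (hr : 0 < r) (hn : 0 < n) :
    (sizeRamsey (pathGraph n) r : ℝ) ≤ 32 * r ^ 2 * (2 * log r + 9) * n := by
  have hr' : (0 : ℝ) < r := Nat.cast_pos.2 hr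
  have hlog : 0 ≤ log r := log_natCast_nonneg r
  set L := ⌈2 * log r + 8⌉₊
  have hL : (16 * exp 1 * r) ^ 2 < exp L := by
    have hexp : 16 < exp 1 ^ 3 := by
      calc (16 : ℝ) < 2.7 ^ 3 := by norm_num
        _ ≤ exp 1 ^ 3 := by gcongr; linarith [exp_one_gt_d9]
    calc (16 * exp 1 * r) ^ 2 < (exp 1 ^ 3 * exp 1 * r) ^ 2 := by gcongr
      _ = exp (2 * log r + 8) := by
          have hexp8 : exp 8 = exp 1 ^ 8 := by simp
          rw [exp_add, two_mul, exp_add, exp_log hr', hexp8]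
          ring
      _ ≤ exp L := exp_le_exp.2 (Nat.le_ceil _)
  have hL' : (L : ℝ) ≤ 2 * log r + 9 := by
    linarith [Nat.ceil_lt_add_one (show 0 ≤ 2 * log r + 8 by linarith)]
  calc (sizeRamsey (pathGraph n) r : ℝ) ≤ (n * L * (r * (32 * r)) : ℕ) :=
        Nat.cast_le.2 (sizeRamsey_pathGraph_le_of_sq_lt_exp hr hn hL)
    _ = 32 * r ^ 2 * L * n := by push_cast; ring
    _ ≤ 32 * r ^ 2 * (2 * log r + 9) * n := by gcongr

theorem sizeRamsey_path_krivelevich_general (C : ℝ) (hC : 4 < C) (r : ℕ) (hr : 0 < r) (n : ℕ)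
    (hn : 0 < n) :
    (sizeRamsey (pathGraph n) r : ℝ) <
      400 ^ 5 * C * (r : ℝ) ^ (2 + 1 / (C - 4) : ℝ) * n := by
  have hr' : (0 : ℝ) < r := Nat.cast_pos.2 hr
  have hC' : 0 < C - 4 := sub_pos.2 hC
  set q := (r : ℝ) ^ (1 / (C - 4)) with hq
  have hq1 : 1 ≤ q := one_le_rpow (Nat.one_le_cast.2 hr) (by positivity)
  have hlog : log r ≤ (C - 4) * q := by
    have := log_le_rpow_div hr'.le (one_div_pos.2 hC')
    rwa [← hq, div_div_eq_mul_div, div_one, mul_comm] at this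
  rw [rpow_add hr', ← hq, rpow_two]
  calc (sizeRamsey (pathGraph n) r : ℝ) ≤ 32 * r ^ 2 * (2 * log r + 9) * n :=
        sizeRamsey_pathGraph_le_mul_log hr hn
    _ ≤ 32 * r ^ 2 * (11 * (C * q)) * n := by gcongr; nlinarith
    _ = 352 * (C * (r ^ 2 * q) * n) := by ring
    _ < 400 ^ 5 * (C * (r ^ 2 * q) * n) := by gcongr; norm_num
    _ = 400 ^ 5 * C * (r ^ 2 * q) * n := by ring

end SizeRamsey

/-- Krivelevich's bound: for any real `C > 5` and integer `r ≥ 2`, for all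
sufficiently large `n`, `R̂(Pₙ, r) < 400⁵ · C · r^(2 + 1/(C-4)) · n`. -/
theorem sizeRamsey_path_krivelevich (C : ℝ) (hC : 5 < C) (r : ℕ) (hr : 2 ≤ r) :
    ∃ N : ℕ, ∀ n : ℕ, N ≤ n →
      (sizeRamsey (pathGraph n) r : ℝ) <
        400 ^ 5 * C * (r : ℝ) ^ (2 + 1 / (C - 4) : ℝ) * n :=
  ⟨1, sizeRamsey_path_krivelevich_general C (by linarith) r (by omega)⟩
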